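/- arXiv:1705.04960 — 3 statements merged into one kernel-verified Lean document; each statement's English description precedes it below -/
import Mathlib

section
/- Let A be an abelian category and E a class of objects of A. Then the full subcategory B = E^{⊥_{0,1}} of objects C with Hom_A(E,C) = 0 = Ext¹_A(E,C) for all E ∈ E is closed under infinite products, kernels of arbitrary morphisms between its objects, and extensions in A. -/
open CategoryTheory CategoryTheory.Limits CategoryTheory.Abelian

universe w w' v u

namespace DerivedCategory

variable {A : Type u} [Category.{v} A] [Abelian A]

/-- Every class of degree one in the derived category is killed by an epimorphism. -/
lemma exists_epi_singleFunctor_map_comp_eq_zero [HasDerivedCategory.{w'} A] {X Y : A}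
    (f : (singleFunctor A 0).obj X ⟶ (singleFunctor A (-1)).obj Y) :
    ∃ (Z : A) (p : Z ⟶ X), Epi p ∧ (singleFunctor A 0).map p ≫ f = 0 := by
  change Q.obj ((HomologicalComplex.single A (.up ℤ) 0).obj X) ⟶
    Q.obj ((HomologicalComplex.single A (.up ℤ) (-1)).obj Y) at f
  have : CochainComplex.IsStrictlyLE ((HomologicalComplex.single A (.up ℤ) 0).obj X) 0 :=
    inferInstanceAs (((CochainComplex.singleFunctor A 0).obj X).IsStrictlyLE 0)
  obtain ⟨K, _, s, _, g, rfl⟩ := right_fac_of_isStrictlyLE f 0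
  let p : K.X 0 ⟶ X := s.f 0 ≫ (HomologicalComplex.singleObjXSelf (.up ℤ) 0 X).hom
  let j : (HomologicalComplex.single A (.up ℤ) 0).obj (K.X 0) ⟶ K :=
    HomologicalComplex.mkHomFromSingle (𝟙 (K.X 0)) (fun k hk ↦
      (K.isZero_of_isStrictlyLE 0 k (by simp at hk; lia)).eq_of_tgt _ _)
  refine ⟨K.X 0, p, Preadditive.epi_of_cancel_zero _ (fun {T} q hq ↦ ?_), ?_⟩
  · have hs : s ≫ (HomologicalComplex.single A (.up ℤ) 0).map q = 0 := by
      apply HomologicalComplex.to_single_hom_ext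
      simp only [p, Category.assoc] at hq
      simp [HomologicalComplex.single_map_f_self, reassoc_of% hq]
    apply (singleFunctor A 0).map_injective
    rw [Functor.map_zero]
    change Q.map ((HomologicalComplex.single A (.up ℤ) 0).map q) = 0
    rw [← cancel_epi (Q.map s), ← Functor.map_comp, hs, Functor.map_zero, comp_zero]
  · have hj : (HomologicalComplex.single A (.up ℤ) 0).map p = j ≫ s := by
      apply HomologicalComplex.from_single_hom_ext
      simp [HomologicalComplex.single_map_f_self, p, j, HomologicalComplex.mkHomFromSingle_f]
    have hg : j ≫ g = 0 := by
      apply HomologicalComplex.from_single_hom_ext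
      exact (HomologicalComplex.isZero_single_obj_X _ _ _ _ (by lia)).eq_of_tgt _ _
    have h : Q.map ((HomologicalComplex.single A (.up ℤ) 0).map p) ≫
        inv (Q.map s) ≫ Q.map g = 0 := by
      rw [hj, Functor.map_comp, Category.assoc, IsIso.hom_inv_id_assoc, ← Functor.map_comp, hg,
        Functor.map_zero]
    exact h

end DerivedCategory

namespace CategoryTheory.Abelian.Ext

variable {A : Type u} [Category.{v} A] [Abelian A] [HasExt.{w} A]

/-- Effaceability of `Ext¹` in the first variable. -/
lemma exists_epi_mk₀_comp_eq_zero {X Y : A} (x : Ext X Y 1) :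
    ∃ (Z : A) (p : Z ⟶ X), Epi p ∧ (mk₀ p).comp x (zero_add 1) = 0 := by
  let := HasDerivedCategory.standard A
  let e := ((DerivedCategory.singleFunctors A).shiftIso 1 (-1) 0 (by lia)).app Y
  obtain ⟨Z, p, hp, h⟩ := DerivedCategory.exists_epi_singleFunctor_map_comp_eq_zero (x.hom ≫ e.hom)
  refine ⟨Z, p, hp, ?_⟩
  ext
  rw [← Category.assoc, ← Limits.zero_comp (f := e.hom), cancel_mono] at h
  rw [comp_hom, mk₀_hom, ShiftedHom.mk₀_comp, zero_hom]
  exact h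

/-- `Ext¹(X, -)` turns a product cone into a jointly injective family. -/
lemma eq_zero_of_comp_mk₀_proj_eq_zero {ι : Type w'} {f : ι → A} {c : Fan f} (hc : IsLimit c)
    {X : A} (x : Ext X c.pt 1) (hx : ∀ i, x.comp (mk₀ (c.proj i)) (add_zero 1) = 0) :
    x = 0 := by
  obtain ⟨Z, p, hp, h⟩ := exists_epi_mk₀_comp_eq_zero x
  let S : ShortComplex A := ShortComplex.mk (kernel.ι p) p (kernel.condition p)
  have hS : S.ShortExact :=
    { exact := S.exact_of_f_is_kernel (kernelIsKernel p)
      mono_f := inferInstanceAs (Mono (kernel.ι p))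
      epi_g := hp }
  obtain ⟨k, rfl⟩ := contravariant_sequence_exact₃ hS c.pt x h (add_zero 1)
  obtain ⟨k, rfl⟩ := mk₀_bijective _ _ |>.surjective k
  have hk (i : ι) : ∃ l : Z ⟶ f i, kernel.ι p ≫ l = k ≫ c.proj i := by
    have hi := hx i
    rw [comp_assoc_of_third_deg_zero, mk₀_comp_mk₀] at hi
    obtain ⟨l, hl⟩ := contravariant_sequence_exact₁ hS (f i) _ (add_zero 1) hi
    obtain ⟨l, rfl⟩ := mk₀_bijective _ _ |>.surjective l
    rw [mk₀_comp_mk₀] at hl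
    exact ⟨l, mk₀_bijective _ _ |>.injective hl⟩
  choose l hl using hk
  have hkl : k = S.f ≫ Fan.IsLimit.lift hc l :=
    Fan.IsLimit.hom_ext hc _ _ (fun i ↦ by simp [S, hl])
  rw [hkl, ← mk₀_comp_mk₀, hS.extClass_comp_assoc]

/-- If `X` has no nonzero morphism to the target of `g`, then the kernel of `g` inherits the
vanishing of `Ext¹(X, -)` from the source of `g`. -/
lemma subsingleton_kernel {X M N : A} (g : M ⟶ N) (hN : ∀ f : X ⟶ N, f = 0)
    [Subsingleton (Ext X M 1)] : Subsingleton (Ext X (kernel g) 1) := by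
  let S : ShortComplex A :=
    ShortComplex.mk (kernel.ι g) (Abelian.coimage.π g) (cokernel.condition _)
  have hS : S.ShortExact :=
    { exact := S.exact_of_g_is_cokernel (cokernelIsCokernel _)
      mono_f := inferInstanceAs (Mono (kernel.ι g))
      epi_g := inferInstanceAs (Epi (Abelian.coimage.π g)) }
  refine subsingleton_of_forall_eq 0 (fun x ↦ ?_)
  obtain ⟨y, rfl⟩ := covariant_sequence_exact₁ X hS x (Subsingleton.elim (α := Ext X M 1) _ _)
    (zero_add 1)
  obtain ⟨y, rfl⟩ := mk₀_bijective _ _ |>.surjective y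
  have hy : y = 0 := by
    rw [← cancel_mono (Abelian.factorThruCoimage g), Limits.zero_comp]
    exact hN _
  rw [hy, mk₀_zero, Ext.zero_comp]

end CategoryTheory.Abelian.Ext

/-- Geigle–Lenzing: for an abelian category `A` and a class of objects `E`, the full
subcategory `B = E^{⊥_{0,1}}` of objects `C` with `Hom(X,C) = 0 = Ext¹(X,C)` for all
`X ∈ E` is closed under infinite products (whenever they exist in `A`), kernels of
arbitrary morphisms between its objects, and extensions. -/
theorem right_one_perpendicular_closure
    {A : Type u} [Category.{v} A] [Abelian A] [HasExt.{w} A]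
    (E : Set A) (B : Set A)
    (hB : ∀ C : A, C ∈ B ↔ ∀ X ∈ E, (∀ f : X ⟶ C, f = 0) ∧ Subsingleton (Ext X C 1)) :
    -- closed under infinite products
    (∀ (ι : Type w') (f : ι → A), (∀ i, f i ∈ B) →
      ∀ (c : Fan f), IsLimit c → c.pt ∈ B) ∧
    -- closed under kernels of arbitrary morphisms between objects of `B`
    (∀ (X Y : A), X ∈ B → Y ∈ B → ∀ g : X ⟶ Y, kernel g ∈ B) ∧
    -- closed under extensions
    (∀ S : ShortComplex A, S.ShortExact → S.X₁ ∈ B → S.X₃ ∈ B → S.X₂ ∈ B) := by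
  refine ⟨fun ι f hf c hc ↦ (hB _).2 fun X hX ↦ ⟨fun g ↦ ?_, ?_⟩,
    fun M N hM hN g ↦ (hB _).2 fun X hX ↦ ⟨fun f ↦ ?_, ?_⟩,
    fun S hS h₁ h₃ ↦ (hB _).2 fun X hX ↦ ⟨fun g ↦ ?_, ?_⟩⟩
  · exact Fan.IsLimit.hom_ext hc _ _ fun i ↦ by
      rw [((hB _).1 (hf i) X hX).1 (g ≫ c.proj i), zero_comp]
  · refine subsingleton_of_forall_eq 0 fun x ↦ Ext.eq_zero_of_comp_mk₀_proj_eq_zero hc x fun i ↦ ?_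
    have := ((hB _).1 (hf i) X hX).2
    exact Subsingleton.elim _ _
  · rw [← cancel_mono (kernel.ι g), zero_comp]
    exact ((hB _).1 hM X hX).1 _
  · have := ((hB _).1 hM X hX).2
    exact Ext.subsingleton_kernel g ((hB _).1 hN X hX).1
  · have := hS.mono_f
    rw [← hS.exact.lift_f g (((hB _).1 h₃ X hX).1 _), ((hB _).1 h₁ X hX).1 (hS.exact.lift g _),
      zero_comp]
  · have := ((hB _).1 h₁ X hX).2
    have := ((hB _).1 h₃ X hX).2
    refine subsingleton_of_forall_eq 0 fun x ↦ ?_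
    obtain ⟨y, rfl⟩ := Ext.covariant_sequence_exact₂ X hS x (Subsingleton.elim _ _)
    rw [Subsingleton.elim y 0, Ext.zero_comp]
end

section
/- The surjective homomorphism B → C of abelian groups, where A = ℤ_p^{(ω)} is a countable direct sum of copies of the p-adic integers, B = ℚ ⊗_ℤ A, and C = (ℚ/ℤ) ⊗_ℤ A, has no kernel in the full subcategory of contraadjusted abelian groups; that is, there is no contraadjusted abelian group K with a morphism K → B that is a kernel of B → C in that full subcategory. -/
open CategoryTheory TensorProduct

/-- An abelian group `D` is contraadjusted if `Ext¹_ℤ(ℤ[s⁻¹], D) = 0` for every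
integer `s`. -/
def Contraadjusted (D : Type) [AddCommGroup D] : Prop :=
  ∀ s : ℤ, Subsingleton
    (((Ext ℤ (ModuleCat.{0} ℤ) 1).obj
        (Opposite.op (ModuleCat.of ℤ (Localization.Away s)))).obj (ModuleCat.of ℤ D))

/-- `A = ℤ_p^{(ω)}`, a countable direct sum of copies of the `p`-adic integers. -/
abbrev PadicDirectSum (p : ℕ) [Fact p.Prime] : Type := ℕ →₀ ℤ_[p]

/-- `B = ℚ ⊗_ℤ A`. -/
abbrev QTensorA (p : ℕ) [Fact p.Prime] : Type := ℚ ⊗[ℤ] (PadicDirectSum p)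

/-- The canonical map `A → B = ℚ ⊗_ℤ A`, `a ↦ 1 ⊗ a`. -/
noncomputable def iotaAB (p : ℕ) [Fact p.Prime] :
    PadicDirectSum p →ₗ[ℤ] QTensorA p :=
  TensorProduct.mk ℤ ℚ (PadicDirectSum p) 1

/-- `C = (ℚ/ℤ) ⊗_ℤ A`, realized as the cokernel of `A → B`. -/
abbrev QmodZTensorA (p : ℕ) [Fact p.Prime] : Type :=
  QTensorA p ⧸ LinearMap.range (iotaAB p)

/-- The surjection `B → C`. -/
noncomputable def piBC (p : ℕ) [Fact p.Prime] : QTensorA p →ₗ[ℤ] QmodZTensorA p :=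
  (LinearMap.range (iotaAB p)).mkQ

namespace CategoryTheory

/-- `Ext¹(X, Y)`, computed from a projective resolution `P` of `X`, vanishes if and only if
every 1-cocycle of `Hom(P, Y)` is a coboundary. -/
lemma ProjectiveResolution.subsingleton_Ext_one_iff {R : Type*} [Ring R] {C : Type*} [Category* C]
    [Abelian C] [Linear R C] [EnoughProjectives C] {X : C} (P : ProjectiveResolution X) (Y : C) :
    Subsingleton (((Ext R C 1).obj (Opposite.op X)).obj Y) ↔
      ∀ f : P.complex.X 1 ⟶ Y, P.complex.d 2 1 ≫ f = 0 →
        ∃ g : P.complex.X 0 ⟶ Y, P.complex.d 1 0 ≫ g = f := by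
  rw [← ModuleCat.isZero_iff_subsingleton, (P.isoExt (R := R) 1 Y).isZero_iff,
    ← HomologicalComplex.exactAt_iff_isZero_homology,
    HomologicalComplex.exactAt_iff' _ 0 1 2 (by simp) (by simp),
    ShortComplex.moduleCat_exact_iff]
  rfl

open Abelian in
/-- The derived-functor `Ext¹` vanishes if and only if the derived-category `Ext¹` does. -/
lemma subsingleton_Ext_one_iff_abelianExt {R : Type*} [Ring R] {C : Type*} [Category* C]
    [Abelian C] [Linear R C] [EnoughProjectives C] [HasExt C] (X Y : C) :
    Subsingleton (((_root_.Ext R C 1).obj (Opposite.op X)).obj Y) ↔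
      Subsingleton (Abelian.Ext X Y 1) := by
  rw [(ProjectiveResolution.of X).subsingleton_Ext_one_iff]
  constructor
  · refine fun h => subsingleton_of_forall_eq 0 fun e => ?_
    obtain ⟨f, hf, rfl⟩ := (ProjectiveResolution.of X).extMk_surjective e 2 rfl
    exact ((ProjectiveResolution.of X).extMk_eq_zero_iff f 2 rfl hf 0 rfl).2 (h f hf)
  · exact fun _ f hf => ((ProjectiveResolution.of X).extMk_eq_zero_iff f 2 rfl hf 0 rfl).1
      (Subsingleton.elim _ _)

open Abelian in
lemma ShortComplex.ShortExact.subsingleton_ext_one_iff {C : Type*} [Category* C] [Abelian C]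
    [HasExt C] {S : ShortComplex C} (hS : S.ShortExact) [Projective S.X₂] (Y : C) :
    Subsingleton (Abelian.Ext S.X₃ Y 1) ↔
      ∀ f : S.X₁ ⟶ Y, ∃ g : S.X₂ ⟶ Y, S.f ≫ g = f := by
  constructor
  · intro _ f
    obtain ⟨x, hx⟩ := Ext.contravariant_sequence_exact₁ hS _ (Ext.mk₀ f) (add_zero 1)
      (Subsingleton.elim _ _)
    refine ⟨Ext.homEquiv₀ x, Ext.homEquiv₀.symm.injective ?_⟩
    rw [← Ext.mk₀_homEquiv₀_apply x, Ext.mk₀_comp_mk₀] at hx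
    exact hx
  · refine fun h => subsingleton_of_forall_eq 0 fun e => ?_
    obtain ⟨x, rfl⟩ := Ext.contravariant_sequence_exact₃ hS _ e
      (Ext.eq_zero_of_projective _) (add_zero 1)
    obtain ⟨g, hg⟩ := h (Ext.homEquiv₀ x)
    rw [← Ext.mk₀_homEquiv₀_apply x, ← hg, ← Ext.mk₀_comp_mk₀]
    exact hS.extClass_comp_assoc _

end CategoryTheory

open Polynomial in
/-- `Ext¹_ℤ(ℤ[s⁻¹], D)` vanishes if and only if all systems `xₙ - s xₙ₊₁ = dₙ` are solvable
in `D`. -/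
lemma subsingleton_Ext_away_iff (s : ℤ) (D : Type) [AddCommGroup D] :
    Subsingleton (((Ext ℤ (ModuleCat.{0} ℤ) 1).obj
        (Opposite.op (ModuleCat.of ℤ (Localization.Away s)))).obj (ModuleCat.of ℤ D)) ↔
      ∀ d : ℕ → D, ∃ x : ℕ → D, ∀ n, x n - s • x (n + 1) = d n := by
  let q : ℤ[X] := C s * X - 1
  let φ : ModuleCat.of ℤ ℤ[X] ⟶ ModuleCat.of ℤ ℤ[X] :=
    ModuleCat.ofHom (LinearMap.mulLeft ℤ q)
  let e := Localization.awayEquivAdjoin s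
  let ψ : ModuleCat.of ℤ ℤ[X] ⟶ ModuleCat.of ℤ (Localization.Away s) :=
    ModuleCat.ofHom ((e.symm : AdjoinRoot q →+ Localization.Away s).comp
      (AdjoinRoot.mk q : ℤ[X] →+ AdjoinRoot q)).toIntLinearMap
  have hψ (a : ℤ[X]) : ψ a = 0 ↔ q ∣ a := by
    rw [← AdjoinRoot.mk_eq_zero]
    change e.symm (AdjoinRoot.mk q a) = 0 ↔ _
    exact EmbeddingLike.map_eq_zero_iff
  have hq : q ≠ 0 := fun h => by simpa [q] using congr_arg (coeff · 0) h
  have w : φ ≫ ψ = 0 := by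
    refine ModuleCat.hom_ext (LinearMap.ext fun a => ?_)
    exact (hψ _).2 (dvd_mul_right q a)
  have hS : (ShortComplex.mk φ ψ w).ShortExact :=
    { exact := by
        rw [ShortComplex.moduleCat_exact_iff]
        intro a ha
        obtain ⟨b, rfl⟩ := (hψ a).1 ha
        exact ⟨b, rfl⟩
      mono_f := (ModuleCat.mono_iff_injective _).2 (mul_right_injective₀ hq)
      epi_g := (ModuleCat.epi_iff_surjective _).2
        (e.symm.surjective.comp AdjoinRoot.mk_surjective) }
  have : Projective (ShortComplex.mk φ ψ w).X₂ :=
    (IsProjective.iff_projective (R := ℤ) (P := ℤ[X])).1 inferInstance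
  have hmon (n : ℕ) : q * monomial n 1 = s • monomial (n + 1) 1 - monomial n 1 := by
    rw [sub_mul, one_mul, mul_assoc, X_mul_monomial, C_mul']
  rw [subsingleton_Ext_one_iff_abelianExt, hS.subsingleton_ext_one_iff]
  constructor
  · intro h d
    obtain ⟨g, hg⟩ := h (ModuleCat.ofHom ((basisMonomials ℤ).constr ℤ d))
    refine ⟨fun n => - g (monomial n 1), fun n => ?_⟩
    have hgd : g (q * monomial n 1) = d n :=
      (LinearMap.congr_fun (congr_arg ModuleCat.Hom.hom hg) (monomial n 1)).trans
        (by simpa using (basisMonomials ℤ).constr_basis ℤ d n)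
    rw [← hgd, hmon, map_sub, map_zsmul]
    simp [neg_add_eq_sub]
  · intro h f
    obtain ⟨x, hx⟩ := h fun n => f (monomial n 1)
    have hc (n : ℕ) : (basisMonomials ℤ).constr ℤ x (monomial n 1) = x n := by
      simpa using (basisMonomials ℤ).constr_basis ℤ x n
    have hf : (-(basisMonomials ℤ).constr ℤ x) ∘ₗ LinearMap.mulLeft ℤ q = f.hom := by
      refine (basisMonomials ℤ).ext fun n => ?_
      rw [coe_basisMonomials, LinearMap.comp_apply, LinearMap.mulLeft_apply, hmon,
        LinearMap.neg_apply, map_sub, map_zsmul, hc, hc, neg_sub]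
      exact hx n
    exact ⟨ModuleCat.ofHom (-(basisMonomials ℤ).constr ℤ x), ModuleCat.hom_ext hf⟩

lemma contraadjusted_padicInt (p : ℕ) [Fact p.Prime] : Contraadjusted ℤ_[p] := by
  intro s
  rw [subsingleton_Ext_away_iff]
  intro d
  by_cases hs : ‖(s : ℤ_[p])‖ < 1
  · have hsum (n : ℕ) : Summable fun k => (s : ℤ_[p]) ^ k * d (n + k) := by
      refine Summable.of_norm_bounded (summable_geometric_of_lt_one (norm_nonneg _) hs) fun k => ?_
      rw [norm_mul, norm_pow]
      exact mul_le_of_le_one_right (by positivity) (PadicInt.norm_le_one _)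
    refine ⟨fun n => ∑' k, (s : ℤ_[p]) ^ k * d (n + k), fun n => ?_⟩
    dsimp only
    rw [(hsum n).tsum_eq_zero_add, zsmul_eq_mul, ← (hsum (n + 1)).tsum_mul_left]
    simp [pow_succ', mul_assoc, add_assoc, add_comm 1]
  · obtain ⟨u, hu⟩ : IsUnit (s : ℤ_[p]) :=
      PadicInt.isUnit_iff.2 ((PadicInt.norm_le_one _).antisymm (not_lt.1 hs))
    refine ⟨fun n => Nat.rec 0 (fun k y => ↑u⁻¹ * (y - d k)) n, fun n => ?_⟩
    simp [← hu]

/-- The system `xₙ - p xₙ₊₁ = eₙ` has no solution in `ℤ_p^{(ω)}`. -/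
lemma not_exists_padicDirectSum_seq (p : ℕ) [Fact p.Prime] :
    ¬ ∃ x : ℕ → PadicDirectSum p,
      ∀ n, x n - (p : ℤ) • x (n + 1) = Finsupp.single n 1 := by
  rintro ⟨x, hx⟩
  obtain ⟨i, hi⟩ := Infinite.exists_notMem_finset (x 0).support
  have hrec (n : ℕ) : x n i = (p : ℤ_[p]) * x (n + 1) i + Finsupp.single n 1 i := by
    simp [← hx n]
  have hlow (n : ℕ) (hn : n ≤ i) : x n i = 0 := by
    induction n with
    | zero => simpa using hi
    | succ n ih =>
      have h := hrec n
      rw [ih (by omega), Finsupp.single_eq_of_ne (by omega), add_zero, eq_comm, mul_eq_zero] at h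
      exact h.resolve_left (NeZero.ne _)
  have h := hrec i
  rw [hlow i le_rfl, Finsupp.single_eq_same] at h
  refine PadicInt.p_nonunit (p := p) (.of_mul_eq_one (-x (i + 1) i) ?_)
  linear_combination h

lemma iotaAB_injective (p : ℕ) [Fact p.Prime] : Function.Injective (iotaAB p) := by
  have h := Module.Flat.rTensor_preserves_injective_linearMap (M := PadicDirectSum p)
    (Algebra.linearMap ℤ ℚ) (algebraMap ℤ ℚ).injective_int
  have hι : ⇑(iotaAB p) = (Algebra.linearMap ℤ ℚ).rTensor (PadicDirectSum p) ∘
      (TensorProduct.lid ℤ (PadicDirectSum p)).symm := by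
    ext1 a
    simp only [iotaAB, Function.comp_apply, TensorProduct.lid_symm_apply, LinearMap.rTensor_tmul,
      Algebra.linearMap_apply, map_one]
    rfl
  rw [hι]
  exact h.comp (LinearEquiv.injective _)

/-- The surjective homomorphism `B → C` of abelian groups, where `A = ℤ_p^{(ω)}`,
`B = ℚ ⊗_ℤ A` and `C = (ℚ/ℤ) ⊗_ℤ A`, has no kernel in the full subcategory of
contraadjusted abelian groups. -/
theorem no_kernel_in_contraadjusted (p : ℕ) [Fact p.Prime] :
    ¬ ∃ (K : Type) (_ : AddCommGroup K) (_ : Contraadjusted K)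
        (k : K →ₗ[ℤ] QTensorA p),
        (piBC p).comp k = 0 ∧
        ∀ (K' : Type) (_ : AddCommGroup K'), Contraadjusted K' →
          ∀ k' : K' →ₗ[ℤ] QTensorA p, (piBC p).comp k' = 0 →
            ∃! u : K' →ₗ[ℤ] K, k.comp u = k' := by
  rintro ⟨K, _, hK, k, hk, huniv⟩
  have hmem (y : K) : k y ∈ LinearMap.range (iotaAB p) :=
    (Submodule.Quotient.mk_eq_zero _).1 (LinearMap.congr_fun hk y)
  have hlift (n : ℕ) : ∃ y : K, k y = iotaAB p (Finsupp.single n 1) := by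
    obtain ⟨u, hu, -⟩ := huniv ℤ_[p] inferInstance (contraadjusted_padicInt p)
      ((iotaAB p).comp ((Finsupp.singleAddHom n).toIntLinearMap))
      (LinearMap.ext fun a => (Submodule.Quotient.mk_eq_zero _).2 ⟨_, rfl⟩)
    exact ⟨u 1, LinearMap.congr_fun hu 1⟩
  choose d hd using hlift
  obtain ⟨x, hx⟩ := (subsingleton_Ext_away_iff p K).1 (hK p) d
  choose a ha using fun n => hmem (x n)
  refine not_exists_padicDirectSum_seq p ⟨a, fun n => iotaAB_injective p ?_⟩
  rw [map_sub, map_zsmul, ha, ha, ← hd, ← hx, map_sub, map_zsmul]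
end

section
/- Let A be an abelian category with enough projectives, B ⊆ A a full subcategory closed under kernels and cokernels in A, reflective with reflector Δ : A → B (left adjoint to the inclusion). If L_nΔ(P) = 0 for every projective object P of B (viewed in A) and all n ≥ 1, then L_nΔ(B) = 0 for every object B of B and all n ≥ 1, where L_nΔ denotes the n-th left derived functor of Δ. -/
open CategoryTheory CategoryTheory.Limits

universe v₁ v₂ u₁ u₂

namespace CategoryTheory

section Resolution

variable {A : Type*} [Category* A] [Abelian A]

lemma ShortComplex.exact_comp_iff_mono {X Y Z W : A} {f : X ⟶ Y} {g : Y ⟶ Z} {w : f ≫ g = 0}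
    (hex : (ShortComplex.mk f g w).Exact) [Epi g] (h : Z ⟶ W) (w' : f ≫ g ≫ h = 0) :
    (ShortComplex.mk f (g ≫ h) w').Exact ↔ Mono h := by
  simp only [ShortComplex.exact_iff_exact_up_to_refinements] at hex ⊢
  constructor
  · intro hex'
    rw [Preadditive.mono_iff_cancel_zero]
    intro T a ha
    obtain ⟨T', π, _, x, hx⟩ := surjective_up_to_refinements_of_epi g a
    obtain ⟨T'', π', _, y, hy⟩ := hex' x (by rw [← reassoc_of% hx, ha, comp_zero])
    rw [← cancel_epi π, ← cancel_epi π', hx, reassoc_of% hy, w]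
    simp
  · intro _ T x hx
    exact hex x (by rw [← cancel_mono h, zero_comp, Category.assoc, hx])

/-- The augmentation of a projective resolution, as a morphism to the resolved object. -/
noncomputable def ProjectiveResolution.augmentation {Z : A} (R : ProjectiveResolution Z) :
    R.complex.X 0 ⟶ Z := R.π.f 0

instance {Z : A} (R : ProjectiveResolution Z) : Epi R.augmentation :=
  inferInstanceAs (Epi (R.π.f 0))

lemma ProjectiveResolution.d_comp_augmentation {Z : A} (R : ProjectiveResolution Z) :
    R.complex.d 1 0 ≫ R.augmentation = 0 :=
  R.complex_d_comp_π_f_zero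

lemma ProjectiveResolution.exact_augmentation {Z : A} (R : ProjectiveResolution Z) :
    (ShortComplex.mk _ _ R.d_comp_augmentation).Exact :=
  ShortComplex.exact_of_g_is_cokernel _ R.isColimitCokernelCofork

lemma ProjectiveResolution.augmentation_comp_f_comp_g {S : ShortComplex A}
    (R : ProjectiveResolution S.X₁) : (R.augmentation ≫ S.f) ≫ S.g = 0 := by
  simp

/-- If `0 ⟶ X₁ ⟶ X₂ ⟶ X₃ ⟶ 0` is short exact and `X₂` is projective, a projective resolution
of `X₁` is spliced with `X₂` into a projective resolution of `X₃`. -/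
noncomputable def ProjectiveResolution.splice {S : ShortComplex A} (hS : S.ShortExact)
    [Projective S.X₂] (R : ProjectiveResolution S.X₁) : ProjectiveResolution S.X₃ where
  complex := R.complex.augment (R.augmentation ≫ S.f)
    (by rw [reassoc_of% R.d_comp_augmentation, zero_comp])
  projective n := by
    cases n
    · exact (inferInstance : Projective S.X₂)
    · exact R.projective _
  π := (ChainComplex.toSingle₀Equiv _ _).symm ⟨S.g, R.augmentation_comp_f_comp_g⟩
  quasiIso := ⟨fun n => by
    have := hS.epi_g
    cases n with
    | zero =>
      rw [ChainComplex.quasiIsoAt₀_iff, ShortComplex.quasiIso_iff_of_zeros']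
      · let T := ShortComplex.mk (R.augmentation ≫ S.f) S.g (by simp)
        have hT : T.Exact :=
          (ShortComplex.exact_iff_of_epi_of_isIso_of_mono
            ({ τ₁ := R.augmentation, τ₂ := 𝟙 _, τ₃ := 𝟙 _ } : T ⟶ S)).2 hS.exact
        refine (ShortComplex.exact_and_epi_g_iff_of_iso ?_).2 ⟨hT, hS.epi_g⟩
        exact ShortComplex.isoMk (Iso.refl _) (Iso.refl _) (Iso.refl _)
          ((Category.id_comp _).trans (Category.comp_id _).symm)
          ((Category.id_comp _).trans
            ((ChainComplex.toSingle₀Equiv_symm_apply_f_zero (C := R.complex.augment _ _)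
              S.g R.augmentation_comp_f_comp_g).symm.trans (Category.comp_id _).symm))
      all_goals rfl
    | succ n =>
      rw [quasiIsoAt_iff_exactAt' _ _ (ChainComplex.exactAt_succ_single_obj _ _),
        HomologicalComplex.exactAt_iff' _ (n + 1 + 1) (n + 1) n (by simp) (by simp)]
      cases n with
      | zero => exact (ShortComplex.exact_comp_iff_mono R.exact_augmentation S.f _).2 hS.mono_f
      | succ n => exact R.exact_succ n⟩

end Resolution

namespace Functor

lemma map_exact_and_epi {A B : Type*} [Category* A] [Category* B] [Abelian A] [Abelian B]
    (F : A ⥤ B) [F.Additive] [PreservesFiniteColimits F]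
    {X Y Z : A} {f : X ⟶ Y} {g : Y ⟶ Z} {w : f ≫ g = 0}
    (hex : (ShortComplex.mk f g w).Exact) (hg : Epi g) :
    (ShortComplex.mk (F.map f) (F.map g) (by rw [← F.map_comp, w, F.map_zero])).Exact ∧
      Epi (F.map g) :=
  have h : PreservesFiniteColimits F ↔
      ∀ S : ShortComplex A, S.Exact ∧ Epi S.g → (S.map F).Exact ∧ Epi (F.map S.g) :=
    (preservesFiniteColimits_tfae F).out 3 1
  h.1 inferInstance _ ⟨hex, hg⟩

variable {A B : Type*} [Category* A] [Category* B] [Abelian A] [EnoughProjectives A] [Abelian B]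
  (F : A ⥤ B) [F.Additive] {S : ShortComplex A}

lemma isZero_leftDerived_obj_succ_iff {Z : A} (R : ProjectiveResolution Z) (n : ℕ) :
    IsZero ((F.leftDerived (n + 1)).obj Z) ↔
      ((ShortComplex.mk _ _ (R.complex.d_comp_d (n + 2) (n + 1) n)).map F).Exact := by
  rw [(R.isoLeftDerivedObj F (n + 1)).isZero_iff]
  erw [← HomologicalComplex.exactAt_iff_isZero_homology]
  rw [HomologicalComplex.exactAt_iff' _ (n + 1 + 1) (n + 1) n (by simp) (by simp)]
  rfl

/-- Dimension shifting. -/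
lemma isZero_leftDerived_obj_X₃_iff (hS : S.ShortExact) [Projective S.X₂] (n : ℕ) :
    IsZero ((F.leftDerived (n + 2)).obj S.X₃) ↔ IsZero ((F.leftDerived (n + 1)).obj S.X₁) := by
  let R := ProjectiveResolution.of S.X₁
  rw [F.isZero_leftDerived_obj_succ_iff R, F.isZero_leftDerived_obj_succ_iff (R.splice hS)]
  rfl

variable [PreservesFiniteColimits F]

lemma isZero_leftDerived_one_obj_X₃_iff (hS : S.ShortExact) [Projective S.X₂] :
    IsZero ((F.leftDerived 1).obj S.X₃) ↔ Mono (F.map S.f) := by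
  let R := ProjectiveResolution.of S.X₁
  obtain ⟨hex, hepi⟩ := F.map_exact_and_epi R.exact_augmentation inferInstance
  rw [F.isZero_leftDerived_obj_succ_iff (R.splice hS) 0,
    ← ShortComplex.exact_comp_iff_mono hex (F.map S.f)
      (by rw [← F.map_comp, ← F.map_comp, reassoc_of% R.d_comp_augmentation, zero_comp, F.map_zero])]
  simp only [← F.map_comp]
  rfl

end Functor

section Rotation

variable {A : Type*} [Category* A] [Abelian A]

/-- A short exact sequence `0 ⟶ X₁ ⟶ X₂ ⟶ X₃ ⟶ 0` together with an epimorphism `p : Q ⟶ X₂`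
yields a short exact sequence `0 ⟶ ker p ⟶ ker (p ≫ g) ⟶ X₁ ⟶ 0`. -/
lemma ShortComplex.ShortExact.exists_kernel_shortExact {S : ShortComplex A} (hS : S.ShortExact)
    {Q : A} (p : Q ⟶ S.X₂) [Epi p] :
    ∃ (j : kernel p ⟶ kernel (p ≫ S.g)) (q : kernel (p ≫ S.g) ⟶ S.X₁) (w : j ≫ q = 0),
      j ≫ kernel.ι (p ≫ S.g) = kernel.ι p ∧ q ≫ S.f = kernel.ι (p ≫ S.g) ≫ p ∧
      (ShortComplex.mk j q w).ShortExact := by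
  have := hS.mono_f
  let j : kernel p ⟶ kernel (p ≫ S.g) := kernel.lift _ (kernel.ι p) (by simp)
  have hj : j ≫ kernel.ι (p ≫ S.g) = kernel.ι p := by simp [j]
  let q : kernel (p ≫ S.g) ⟶ S.X₁ := hS.exact.lift (kernel.ι (p ≫ S.g) ≫ p) (by simp)
  have hq : q ≫ S.f = kernel.ι (p ≫ S.g) ≫ p := hS.exact.lift_f _ _
  have w : j ≫ q = 0 := by
    rw [← cancel_mono S.f, Category.assoc, hq, reassoc_of% hj, kernel.condition, zero_comp]
  refine ⟨j, q, w, hj, hq, ?_⟩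
  have hmono : Mono j := by
    have : Mono (j ≫ kernel.ι (p ≫ S.g)) := by rw [hj]; infer_instance
    exact mono_of_mono j (kernel.ι (p ≫ S.g))
  have hepi : Epi q := by
    rw [epi_iff_surjective_up_to_refinements]
    intro T y
    obtain ⟨T', π, hπ, x, hx⟩ := surjective_up_to_refinements_of_epi p (y ≫ S.f)
    refine ⟨T', π, hπ, kernel.lift _ x (by rw [← reassoc_of% hx, S.zero]; simp), ?_⟩
    rw [← cancel_mono S.f, Category.assoc, Category.assoc, hq, kernel.lift_ι_assoc, hx]
  have hex : (ShortComplex.mk j q w).Exact := by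
    rw [ShortComplex.exact_iff_exact_up_to_refinements]
    intro T x hx
    dsimp at x hx
    refine ⟨T, 𝟙 _, inferInstance, kernel.lift _ (x ≫ kernel.ι _) ?_, ?_⟩
    · rw [Category.assoc, ← hq, reassoc_of% hx, zero_comp]
    · dsimp
      rw [← cancel_mono (kernel.ι (p ≫ S.g)), Category.assoc, Category.assoc, hj, kernel.lift_ι,
        Category.id_comp]
  exact ⟨hex⟩

lemma ShortComplex.shortExact_kernel {X Y : A} (f : X ⟶ Y) [Epi f] :
    (ShortComplex.mk (kernel.ι f) f (kernel.condition f)).ShortExact where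
  exact := ShortComplex.exact_of_f_is_kernel _ (kernelIsKernel f)
  mono_f := inferInstanceAs (Mono (kernel.ι f))
  epi_g := inferInstanceAs (Epi f)

end Rotation

namespace Functor

variable {A B : Type*} [Category* A] [Category* B] [Abelian A] [EnoughProjectives A] [Abelian B]
  (F : A ⥤ B) [F.Additive] {S : ShortComplex A}

lemma isZero_leftDerived_X₃_of_forall_X₂ (n : ℕ)
    (hF : ∀ T : ShortComplex A, T.ShortExact → IsZero ((F.leftDerived (n + 1)).obj T.X₁) →
      IsZero ((F.leftDerived (n + 1)).obj T.X₃) → IsZero ((F.leftDerived (n + 1)).obj T.X₂))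
    (hS : S.ShortExact) (h₂ : IsZero ((F.leftDerived (n + 2)).obj S.X₂))
    (h₁ : IsZero ((F.leftDerived (n + 1)).obj S.X₁)) :
    IsZero ((F.leftDerived (n + 2)).obj S.X₃) := by
  have := hS.epi_g
  let p := Projective.π S.X₂
  obtain ⟨j, q, w, hj, hq, hT⟩ := hS.exists_kernel_shortExact p
  exact (F.isZero_leftDerived_obj_X₃_iff (ShortComplex.shortExact_kernel (p ≫ S.g)) n).2
    (hF _ hT ((F.isZero_leftDerived_obj_X₃_iff (ShortComplex.shortExact_kernel p) n).1 h₂) h₁)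

variable [PreservesFiniteColimits F]

lemma mono_map_f_of_isZero_leftDerived_one (hS : S.ShortExact)
    (h₃ : IsZero ((F.leftDerived 1).obj S.X₃)) : Mono (F.map S.f) := by
  have := hS.epi_g
  let p := Projective.π S.X₂
  obtain ⟨j, q, w, hj, hq, hT⟩ := hS.exists_kernel_shortExact p
  have hQ₃ := ShortComplex.shortExact_kernel (p ≫ S.g)
  have hQ₂ := ShortComplex.shortExact_kernel p
  have := (F.isZero_leftDerived_one_obj_X₃_iff hQ₃).1 h₃
  dsimp at this
  obtain ⟨-, hq'⟩ := F.map_exact_and_epi hT.exact hT.epi_g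
  obtain ⟨hex, -⟩ := F.map_exact_and_epi hQ₂.exact hQ₂.epi_g
  rw [Preadditive.mono_iff_cancel_zero]
  intro T a ha
  obtain ⟨T', π, _, x, hx⟩ := surjective_up_to_refinements_of_epi (F.map q) a
  obtain ⟨T'', π', _, y, hy⟩ := hex.exact_up_to_refinements (x ≫ F.map (kernel.ι (p ≫ S.g))) (by
    dsimp
    rw [Category.assoc, ← F.map_comp, ← hq, F.map_comp, ← reassoc_of% hx, ha, comp_zero])
  dsimp at y hy
  have hxy : π' ≫ x = y ≫ F.map j := by
    rw [← cancel_mono (F.map (kernel.ι (p ≫ S.g))), Category.assoc, hy, Category.assoc,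
      ← F.map_comp, hj]
  rw [← cancel_epi π, ← cancel_epi π', hx, reassoc_of% hxy, ← F.map_comp, w]
  simp

lemma isZero_leftDerived_one_X₃_of_mono_map_f (hS : S.ShortExact)
    (h₂ : IsZero ((F.leftDerived 1).obj S.X₂)) [Mono (F.map S.f)] :
    IsZero ((F.leftDerived 1).obj S.X₃) := by
  have := hS.epi_g
  let p := Projective.π S.X₂
  obtain ⟨j, q, w, hj, hq, hT⟩ := hS.exists_kernel_shortExact p
  have hQ₃ := ShortComplex.shortExact_kernel (p ≫ S.g)
  have hQ₂ := ShortComplex.shortExact_kernel p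
  have := (F.isZero_leftDerived_one_obj_X₃_iff hQ₂).1 h₂
  dsimp at this
  obtain ⟨hex, -⟩ := F.map_exact_and_epi hT.exact hT.epi_g
  refine (F.isZero_leftDerived_one_obj_X₃_iff hQ₃).2 ?_
  dsimp
  rw [Preadditive.mono_iff_cancel_zero]
  intro T a ha
  obtain ⟨T', π, _, y, hy⟩ := hex.exact_up_to_refinements a (by
    dsimp
    rw [← cancel_mono (F.map S.f), Category.assoc, ← F.map_comp, hq, F.map_comp,
      reassoc_of% ha, zero_comp, zero_comp])
  dsimp at hy
  have hy₀ : y = 0 := by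
    rw [← cancel_mono (F.map (kernel.ι p)), ← hj, F.map_comp, ← reassoc_of% hy, ha]
    simp
  rw [← cancel_epi π, hy, hy₀]
  simp

/-- In a short exact sequence, vanishing of the left derived functors propagates to the middle
term, and from the middle and third terms to the first one. -/
lemma isZero_leftDerived_X₂_and_X₁ (n : ℕ) : ∀ {S : ShortComplex A}, S.ShortExact →
    (IsZero ((F.leftDerived (n + 1)).obj S.X₁) → IsZero ((F.leftDerived (n + 1)).obj S.X₃) →
      IsZero ((F.leftDerived (n + 1)).obj S.X₂)) ∧
    (IsZero ((F.leftDerived (n + 1)).obj S.X₂) → IsZero ((F.leftDerived (n + 2)).obj S.X₃) →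
      IsZero ((F.leftDerived (n + 1)).obj S.X₁)) := by
  induction n with
  | zero =>
    intro S hS
    have := hS.epi_g
    let p := Projective.π S.X₂
    obtain ⟨j, q, w, hj, hq, hT⟩ := hS.exists_kernel_shortExact p
    have hQ₃ := ShortComplex.shortExact_kernel (p ≫ S.g)
    have hQ₂ := ShortComplex.shortExact_kernel p
    have hcomp : F.map (kernel.ι p) = F.map j ≫ F.map (kernel.ι (p ≫ S.g)) := by
      rw [← F.map_comp, hj]
    refine ⟨fun h₁ h₃ ↦ ?_, fun h₂ h₃ ↦ ?_⟩
    · have hm : Mono (F.map j) := F.mono_map_f_of_isZero_leftDerived_one hT h₁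
      have hm' : Mono (F.map (kernel.ι (p ≫ S.g))) :=
        (F.isZero_leftDerived_one_obj_X₃_iff hQ₃).1 h₃
      refine (F.isZero_leftDerived_one_obj_X₃_iff hQ₂).2 ?_
      dsimp
      rw [hcomp]
      infer_instance
    · have hm : Mono (F.map (kernel.ι p)) := (F.isZero_leftDerived_one_obj_X₃_iff hQ₂).1 h₂
      rw [hcomp] at hm
      have hm' : Mono (F.map (ShortComplex.mk j q w).f) := mono_of_mono (F.map j) (F.map (kernel.ι (p ≫ S.g)))
      exact F.isZero_leftDerived_one_X₃_of_mono_map_f hT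
        ((F.isZero_leftDerived_obj_X₃_iff hQ₃ 0).1 h₃)
  | succ n ih =>
    intro S hS
    have := hS.epi_g
    let p := Projective.π S.X₂
    obtain ⟨j, q, w, hj, hq, hT⟩ := hS.exists_kernel_shortExact p
    have hQ₃ := ShortComplex.shortExact_kernel (p ≫ S.g)
    have hQ₂ := ShortComplex.shortExact_kernel p
    refine ⟨fun h₁ h₃ ↦ ?_, fun h₂ h₃ ↦ ?_⟩
    · exact (F.isZero_leftDerived_obj_X₃_iff hQ₂ n).2
        ((ih hT).2 ((F.isZero_leftDerived_obj_X₃_iff hQ₃ n).1 h₃) h₁)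
    · exact F.isZero_leftDerived_X₃_of_forall_X₂ n (fun _ h ↦ (ih h).1) hT
        ((F.isZero_leftDerived_obj_X₃_iff hQ₃ (n + 1)).1 h₃)
        ((F.isZero_leftDerived_obj_X₃_iff hQ₂ n).1 h₂)

lemma isZero_leftDerived_X₃ (hS : S.ShortExact) (n : ℕ)
    (h₂ : IsZero ((F.leftDerived (n + 2)).obj S.X₂))
    (h₁ : IsZero ((F.leftDerived (n + 1)).obj S.X₁)) :
    IsZero ((F.leftDerived (n + 2)).obj S.X₃) :=
  F.isZero_leftDerived_X₃_of_forall_X₂ n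
    (fun _ h ↦ (F.isZero_leftDerived_X₂_and_X₁ n h).1) hS h₂ h₁

end Functor

end CategoryTheory

/-- Let `A` be an abelian category with enough projectives, `B` a (reflective, exactly
embedded) full abelian subcategory of `A`: the inclusion `ι : B ⥤ A` is fully faithful and
exact, with left adjoint (reflector) `Δ : A ⥤ B`.  If `LₙΔ(P) = 0` for every projective
object `P` of `B` and all `n ≥ 1`, then `LₙΔ(B) = 0` for every object `B` of `B` and all
`n ≥ 1`. -/
theorem leftDerived_reflector_vanishes_on_subcategory
    {A : Type u₁} [Category.{v₁} A] [Abelian A] [EnoughProjectives A]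
    {B : Type u₂} [Category.{v₂} B] [Abelian B]
    (ι : B ⥤ A) [ι.Full] [ι.Faithful]
    [PreservesFiniteLimits ι] [PreservesFiniteColimits ι]
    (Δ : A ⥤ B) [Δ.Additive] (adj : Δ ⊣ ι)
    (hproj : ∀ (P : B), Projective P → ∀ n : ℕ, 1 ≤ n →
      IsZero ((Δ.leftDerived n).obj (ι.obj P))) :
    ∀ (X : B) (n : ℕ), 1 ≤ n → IsZero ((Δ.leftDerived n).obj (ι.obj X)) := by
  have : PreservesFiniteColimits Δ := by
    have := adj.leftAdjoint_preservesColimits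
    infer_instance
  have : ι.Additive := Functor.additive_of_preserves_binary_products ι
  have hcover (X : B) : ∃ (P : B) (p : P ⟶ X), Projective P ∧ Epi p :=
    ⟨Δ.obj (Projective.over (ι.obj X)), Δ.map (Projective.π (ι.obj X)) ≫ adj.counit.app X,
      adj.map_projective _ inferInstance, inferInstance⟩
  intro X n hn
  obtain ⟨n, rfl⟩ := Nat.exists_eq_add_of_le' hn
  clear hn
  induction n generalizing X with
  | zero =>
    obtain ⟨P, p, hP, _⟩ := hcover X
    have hS := (ShortComplex.shortExact_kernel p).map_of_exact ι
    have : Mono (Δ.map ((ShortComplex.mk _ _ (kernel.condition p)).map ι).f) := by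
      have e := adj.counit.naturality (kernel.ι p)
      have : Mono (Δ.map (ι.map (kernel.ι p)) ≫ adj.counit.app P) := by
        dsimp at e
        rw [e]
        infer_instance
      exact mono_of_mono (Δ.map (ι.map (kernel.ι p))) (adj.counit.app P)
    exact Δ.isZero_leftDerived_one_X₃_of_mono_map_f hS (hproj P hP 1 le_rfl)
  | succ n ih =>
    obtain ⟨P, p, hP, _⟩ := hcover X
    exact Δ.isZero_leftDerived_X₃ ((ShortComplex.shortExact_kernel p).map_of_exact ι) n
      (hproj P hP _ (by lia)) (ih (kernel p))
end
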